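/- arXiv:2310.11455 — 2 statements merged into one kernel-verified Lean document; each statement's English description precedes it below -/
import Mathlib

section
/- Let D ⊂ ℂ be a bounded simply connected open set, let f : ℂ → ℂ be a homeomorphism of ℂ which is holomorphic on D, and let arg₀ : D → ℝ be a continuous function such that (deriv f)(z)·exp(−i·arg₀(z)) is a positive real number for every z ∈ D. Let η : [0,1] → ℂ be a curve regular near its endpoints with η(0) ∈ D and η(1) ∈ D. Then for every regular simple curve r representing η and every regular simple curve s representing f ∘ η, one has TC(s) − TC(r) = arg₀(η(1)) − arg₀(η(0)), where TC denotes total curvature. -/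
/-- The derivative of a curve `η : [0,1] → ℂ`, taken within `[0,1]`. -/
noncomputable def curveDeriv (η : ℝ → ℂ) : ℝ → ℂ :=
  fun t => derivWithin η (Set.Icc 0 1) t

/-- A regular curve: continuously differentiable on `[0,1]` with nonvanishing derivative. -/
def IsRegularCurve (η : ℝ → ℂ) : Prop :=
  ContDiffOn ℝ 1 η (Set.Icc 0 1) ∧ ∀ t ∈ Set.Icc (0 : ℝ) 1, curveDeriv η t ≠ 0

/-- A regular simple curve: an injective regular curve. -/
def IsRegularSimpleCurve (η : ℝ → ℂ) : Prop :=
  IsRegularCurve η ∧ Set.InjOn η (Set.Icc 0 1)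

/-- `θ` is an argument lift of the nowhere-vanishing function `g` on `[0,1]`:
`θ` is continuous and `g(t)·exp(−i·θ(t))` is a positive real number for all `t`. -/
def IsArgLift (g : ℝ → ℂ) (θ : ℝ → ℝ) : Prop :=
  ContinuousOn θ (Set.Icc 0 1) ∧
    ∀ t ∈ Set.Icc (0 : ℝ) 1, ∃ r : ℝ, 0 < r ∧
      g t * Complex.exp (-(θ t : ℂ) * Complex.I) = (r : ℂ)

open Classical in
/-- The total curvature of a curve: `θ(1) − θ(0)` for an argument lift `θ` of its
derivative (and `0` if no argument lift exists). -/
noncomputable def totalCurvature (η : ℝ → ℂ) : ℝ :=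
  if h : ∃ θ : ℝ → ℝ, IsArgLift (curveDeriv η) θ then h.choose 1 - h.choose 0 else 0

/-- A curve regular near its endpoints: an injective continuous curve which is
continuously differentiable with nonvanishing derivative on `[0,ε]` and `[1−ε,1]`
for some `ε ∈ (0, 1/2)`. -/
def RegularNearEndpoints (η : ℝ → ℂ) : Prop :=
  ContinuousOn η (Set.Icc 0 1) ∧ Set.InjOn η (Set.Icc 0 1) ∧
    ∃ ε ∈ Set.Ioo (0 : ℝ) (1 / 2),
      ContDiffOn ℝ 1 η (Set.Icc 0 ε) ∧ ContDiffOn ℝ 1 η (Set.Icc (1 - ε) 1) ∧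
        ∀ t ∈ Set.Icc (0 : ℝ) ε ∪ Set.Icc (1 - ε) 1, curveDeriv η t ≠ 0

/-- `r` represents `η`: `r` agrees with `η` near the endpoints and the middle parts
are homotopic (rel endpoints) in the twice-slitted plane
`ℂ \ (η([0,ε]) ∪ η([1−ε,1]))`. -/
def Represents (r η : ℝ → ℂ) : Prop :=
  ∃ ε ∈ Set.Ioo (0 : ℝ) (1 / 2),
    (∀ t ∈ Set.Icc (0 : ℝ) ε ∪ Set.Icc (1 - ε) 1, r t = η t) ∧
    ∃ H : ℝ × ℝ → ℂ,
      ContinuousOn H (Set.Icc 0 1 ×ˢ Set.Icc ε (1 - ε)) ∧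
      (∀ t ∈ Set.Icc ε (1 - ε), H (0, t) = η t ∧ H (1, t) = r t) ∧
      (∀ s ∈ Set.Icc (0 : ℝ) 1, H (s, ε) = η ε ∧ H (s, 1 - ε) = η (1 - ε)) ∧
      ∀ s ∈ Set.Icc (0 : ℝ) 1, ∀ t ∈ Set.Ioo ε (1 - ε),
        H (s, t) ∉ η '' Set.Icc 0 ε ∪ η '' Set.Icc (1 - ε) 1

/-!
Hopf's proof of the Umlaufsatz: for a regular simple curve `r`, the slope `(r t - r s) / (t - s)`,
extended by `r'` to the diagonal, is continuous and nonvanishing on the unit square. So the argument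
increment of `r'` along the diagonal, which is the total curvature, is the sum of the increments
along two sides, that is, of the chords issuing from the two endpoints of `r`. A homotopy in the
slit plane does not change these two increments, so they are computed by the represented curve.

The chords of `f ∘ η` are those of `η` times the divided difference of `f`, so the difference of the
total curvatures is the sum over the two endpoints `p` of the argument increment of
`(f z - f p) / (z - p)` along `η`. Each such function is continuous and nonvanishing on `ℂ`, so `η`
may be replaced by a path in `D` with the same endpoints. There the square argument, run backwards
for the divided difference of `f`, gives the increment of the argument of `f'`.
-/

open Set Filter Topology

/-! ### Argument increments -/

theorem exists_continuousOn_log_of_convex {E : Type*} [NormedAddCommGroup E] [NormedSpace ℝ E]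
    {S : Set E} (hS : Convex ℝ S) {F : E → ℂ} (hF : ContinuousOn F S) (hF₀ : ∀ x ∈ S, F x ≠ 0) :
    ∃ L : E → ℂ, ContinuousOn L S ∧ ∀ x ∈ S, Complex.exp (L x) = F x := by
  rcases S.eq_empty_or_nonempty with rfl | hne
  · exact ⟨0, continuousOn_empty _, fun _ hx => hx.elim⟩
  have : ContractibleSpace S := hS.contractibleSpace hne
  have : LocallyPathConnectedSpace S := hS.locallyPathConnectedSpace
  obtain ⟨a, ha⟩ := hne
  obtain ⟨L, ⟨-, hL⟩, -⟩ := Complex.isCoveringMapOn_exp.existsUnique_continuousMap_lifts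
    (⟨S.domRestrict F, hF.domRestrict⟩ : C(S, ℂ)) (a₀ := ⟨a, ha⟩) (e₀ := Complex.log (F a))
    (Complex.exp_log (hF₀ a ha)) (fun x => hF₀ x x.2)
  let L' : E → ℂ := Function.extend Subtype.val L 0
  have hL' : S.domRestrict L' = L := funext fun x => Subtype.val_injective.extend_apply L 0 x
  refine ⟨L', ?_, fun x hx => ?_⟩
  · rw [continuousOn_iff_continuous_domRestrict, hL']
    exact L.continuous
  · rw [show L' x = L ⟨x, hx⟩ from congrFun hL' ⟨x, hx⟩]
    exact congrFun hL ⟨x, hx⟩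

namespace IsArgLift

variable {g h : ℝ → ℂ} {θ φ : ℝ → ℝ}

theorem of_exp_eq {L : ℝ → ℂ} (hL : ContinuousOn L (Icc 0 1))
    (hexp : ∀ t ∈ Icc (0 : ℝ) 1, Complex.exp (L t) = g t) : IsArgLift g fun t => (L t).im := by
  refine ⟨Complex.continuous_im.comp_continuousOn hL, fun t ht =>
    ⟨Real.exp (L t).re, Real.exp_pos _, ?_⟩⟩
  rw [← hexp t ht, ← Complex.exp_add, Complex.ofReal_exp]
  congr 1
  apply Complex.ext <;> simp

theorem congr (hθ : IsArgLift g θ) (hgh : EqOn g h (Icc 0 1)) : IsArgLift h θ :=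
  ⟨hθ.1, fun t ht => hgh ht ▸ hθ.2 t ht⟩

theorem mul (hθ : IsArgLift g θ) (hφ : IsArgLift h φ) :
    IsArgLift (fun t => g t * h t) fun t => θ t + φ t := by
  refine ⟨hθ.1.add hφ.1, fun t ht => ?_⟩
  obtain ⟨ρ, hρ, hg⟩ := hθ.2 t ht
  obtain ⟨σ, hσ, hh⟩ := hφ.2 t ht
  refine ⟨ρ * σ, mul_pos hρ hσ, ?_⟩
  rw [Complex.ofReal_mul, ← hg, ← hh, Complex.ofReal_add, neg_add, add_mul, Complex.exp_add]
  ring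

theorem coe_angle_eq (hθ : IsArgLift g θ) {t : ℝ} (ht : t ∈ Icc (0 : ℝ) 1) :
    (θ t : Real.Angle) = Complex.arg (g t) := by
  obtain ⟨ρ, hρ, hg⟩ := hθ.2 t ht
  have hpolar : g t = ρ * (Real.Angle.cos (θ t) + Real.Angle.sin (θ t) * Complex.I) := by
    rw [← hg, Real.Angle.cos_coe, Real.Angle.sin_coe, Complex.ofReal_cos, Complex.ofReal_sin,
      ← Complex.exp_mul_I, mul_assoc, ← Complex.exp_add, neg_mul, neg_add_cancel, Complex.exp_zero,
      mul_one]
  rw [hpolar, Complex.arg_mul_cos_add_sin_mul_I_coe_angle hρ]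

theorem sub_eq_sub (hθ : IsArgLift g θ) (hφ : IsArgLift g φ) : θ 1 - θ 0 = φ 1 - φ 0 := by
  have hdiscrete : IsDiscrete (AddSubgroup.zmultiples (2 * Real.pi) : Set ℝ) :=
    ⟨inferInstanceAs (DiscreteTopology (AddSubgroup.zmultiples (2 * Real.pi)))⟩
  have hmaps : MapsTo (fun t => θ t - φ t) (Icc 0 1) (AddSubgroup.zmultiples (2 * Real.pi)) := by
    intro t ht
    obtain ⟨n, hn⟩ := Real.Angle.angle_eq_iff_two_pi_dvd_sub.1
      ((hθ.coe_angle_eq ht).trans (hφ.coe_angle_eq ht).symm)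
    exact AddSubgroup.mem_zmultiples_iff.2 ⟨n, by simp only [hn, zsmul_eq_mul, mul_comm]⟩
  have hconst : θ 1 - φ 1 = θ 0 - φ 0 := isPreconnected_Icc.constant_of_mapsTo hdiscrete
    (hθ.1.sub hφ.1) hmaps (right_mem_Icc.2 zero_le_one) (left_mem_Icc.2 zero_le_one)
  linarith

end IsArgLift

theorem exists_isArgLift {g : ℝ → ℂ} (hg : ContinuousOn g (Icc 0 1))
    (hg₀ : ∀ t ∈ Icc (0 : ℝ) 1, g t ≠ 0) : ∃ θ, IsArgLift g θ :=
  let ⟨_, hL, hexp⟩ := exists_continuousOn_log_of_convex (convex_Icc 0 1) hg hg₀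
  ⟨_, .of_exp_eq hL hexp⟩

open Classical in
/-- The increment over `[0,1]` of a continuous argument of `g`, with value `0` if there is none.
The total curvature of a curve is the argument increment of its derivative. -/
noncomputable def argIncrement (g : ℝ → ℂ) : ℝ :=
  if h : ∃ θ : ℝ → ℝ, IsArgLift g θ then h.choose 1 - h.choose 0 else 0

theorem totalCurvature_eq_argIncrement (η : ℝ → ℂ) :
    totalCurvature η = argIncrement (curveDeriv η) := rfl

theorem IsArgLift.argIncrement_eq {g : ℝ → ℂ} {θ : ℝ → ℝ} (hθ : IsArgLift g θ) :
    argIncrement g = θ 1 - θ 0 := by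
  have hex : ∃ θ : ℝ → ℝ, IsArgLift g θ := ⟨θ, hθ⟩
  rw [argIncrement, dif_pos hex]
  exact hex.choose_spec.sub_eq_sub hθ

theorem argIncrement_congr {g h : ℝ → ℂ} (hgh : EqOn g h (Icc 0 1)) :
    argIncrement g = argIncrement h := by
  have hlifts : IsArgLift g = IsArgLift h :=
    funext fun _ => propext ⟨fun hθ => hθ.congr hgh, fun hθ => hθ.congr hgh.symm⟩
  rw [argIncrement, argIncrement, hlifts]

theorem argIncrement_mul {g h : ℝ → ℂ} (hg : ContinuousOn g (Icc 0 1))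
    (hg₀ : ∀ t ∈ Icc (0 : ℝ) 1, g t ≠ 0) (hh : ContinuousOn h (Icc 0 1))
    (hh₀ : ∀ t ∈ Icc (0 : ℝ) 1, h t ≠ 0) :
    argIncrement (fun t => g t * h t) = argIncrement g + argIncrement h := by
  obtain ⟨θ, hθ⟩ := exists_isArgLift hg hg₀
  obtain ⟨φ, hφ⟩ := exists_isArgLift hh hh₀
  rw [(hθ.mul hφ).argIncrement_eq, hθ.argIncrement_eq, hφ.argIncrement_eq]
  ring

theorem argIncrement_div {g h : ℝ → ℂ} (hg : ContinuousOn g (Icc 0 1))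
    (hg₀ : ∀ t ∈ Icc (0 : ℝ) 1, g t ≠ 0) (hh : ContinuousOn h (Icc 0 1))
    (hh₀ : ∀ t ∈ Icc (0 : ℝ) 1, h t ≠ 0) :
    argIncrement (fun t => g t / h t) = argIncrement g - argIncrement h := by
  have hcancel : EqOn (fun t => g t / h t * h t) g (Icc 0 1) := fun t ht =>
    div_mul_cancel₀ _ (hh₀ t ht)
  have hgh : ContinuousOn (fun t => g t / h t) (Icc 0 1) := hg.div hh hh₀
  rw [← argIncrement_congr hcancel, argIncrement_mul hgh
    (fun t ht => div_ne_zero (hg₀ t ht) (hh₀ t ht)) hh hh₀, add_sub_cancel_right]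

theorem argIncrement_const {c : ℂ} (hc : c ≠ 0) : argIncrement (fun _ => c) = 0 :=
  (IsArgLift.of_exp_eq (L := fun _ => Complex.log c) continuousOn_const fun _ _ =>
    Complex.exp_log hc).argIncrement_eq.trans (sub_self _)

theorem exists_argIncrement_comp_eq_sub_of_convex {E : Type*} [NormedAddCommGroup E]
    [NormedSpace ℝ E] {S : Set E} (hS : Convex ℝ S) {F : E → ℂ} (hF : ContinuousOn F S)
    (hF₀ : ∀ x ∈ S, F x ≠ 0) :
    ∃ Φ : E → ℝ, ∀ γ : ℝ → E, ContinuousOn γ (Icc 0 1) → MapsTo γ (Icc 0 1) S →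
      argIncrement (fun t => F (γ t)) = Φ (γ 1) - Φ (γ 0) := by
  obtain ⟨L, hL, hexp⟩ := exists_continuousOn_log_of_convex hS hF hF₀
  exact ⟨fun x => (L x).im, fun γ hγ hγS =>
    (IsArgLift.of_exp_eq (hL.comp hγ hγS) fun t ht => hexp _ (hγS ht)).argIncrement_eq⟩

theorem argIncrement_comp_eq_of_convex {E : Type*} [NormedAddCommGroup E] [NormedSpace ℝ E]
    {S : Set E} (hS : Convex ℝ S) {F : E → ℂ} (hF : ContinuousOn F S) (hF₀ : ∀ x ∈ S, F x ≠ 0)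
    {γ δ : ℝ → E} (hγ : ContinuousOn γ (Icc 0 1)) (hγS : MapsTo γ (Icc 0 1) S)
    (hδ : ContinuousOn δ (Icc 0 1)) (hδS : MapsTo δ (Icc 0 1) S) (h₀ : γ 0 = δ 0)
    (h₁ : γ 1 = δ 1) : argIncrement (fun t => F (γ t)) = argIncrement (fun t => F (δ t)) := by
  obtain ⟨Φ, hΦ⟩ := exists_argIncrement_comp_eq_sub_of_convex hS hF hF₀
  rw [hΦ γ hγ hγS, hΦ δ hδ hδS, h₀, h₁]

theorem argIncrement_diag_of_symm {F : ℝ × ℝ → ℂ} (hF : ContinuousOn F (Icc 0 1 ×ˢ Icc 0 1))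
    (hF₀ : ∀ x ∈ Icc (0 : ℝ) 1 ×ˢ Icc (0 : ℝ) 1, F x ≠ 0) (hsymm : ∀ s t, F (s, t) = F (t, s)) :
    argIncrement (fun t => F (t, t)) =
      argIncrement (fun t => F (0, t)) + argIncrement (fun t => F (1, t)) := by
  obtain ⟨Φ, hΦ⟩ := exists_argIncrement_comp_eq_sub_of_convex
    ((convex_Icc 0 1).prod (convex_Icc 0 1)) hF hF₀
  have hdiag : argIncrement (fun t => F (t, t)) = Φ (1, 1) - Φ (0, 0) :=
    hΦ (fun t => (t, t)) (by fun_prop) fun t ht => ⟨ht, ht⟩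
  have hleft : argIncrement (fun t => F (0, t)) = Φ (0, 1) - Φ (0, 0) :=
    hΦ (fun t => (0, t)) (by fun_prop) fun t ht => ⟨by simp, ht⟩
  have htop : argIncrement (fun t => F (t, 1)) = Φ (1, 1) - Φ (0, 1) :=
    hΦ (fun t => (t, 1)) (by fun_prop) fun t ht => ⟨ht, by simp⟩
  simp only [hsymm 1]
  linarith

theorem argIncrement_eq_of_homotopy {F : ℝ × ℝ → ℂ} (hF : ContinuousOn F (Icc 0 1 ×ˢ Icc 0 1))
    (hF₀ : ∀ x ∈ Icc (0 : ℝ) 1 ×ˢ Icc (0 : ℝ) 1, F x ≠ 0)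
    (h₀ : ∀ s ∈ Icc (0 : ℝ) 1, F (s, 0) = F (0, 0))
    (h₁ : ∀ s ∈ Icc (0 : ℝ) 1, F (s, 1) = F (0, 1)) :
    argIncrement (fun t => F (1, t)) = argIncrement (fun t => F (0, t)) := by
  obtain ⟨Φ, hΦ⟩ := exists_argIncrement_comp_eq_sub_of_convex
    ((convex_Icc 0 1).prod (convex_Icc 0 1)) hF hF₀
  have hvert : ∀ s ∈ Icc (0 : ℝ) 1,
      argIncrement (fun t => F (s, t)) = Φ (s, 1) - Φ (s, 0) := fun s hs =>
    hΦ (fun t => (s, t)) (by fun_prop) fun t ht => ⟨hs, ht⟩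
  have hhoriz : ∀ t ∈ Icc (0 : ℝ) 1, (∀ s ∈ Icc (0 : ℝ) 1, F (s, t) = F (0, t)) →
      Φ (1, t) = Φ (0, t) := fun t ht hconst => by
    have hside : argIncrement (fun s => F (s, t)) = Φ (1, t) - Φ (0, t) :=
      hΦ (fun s => (s, t)) (by fun_prop) fun s hs => ⟨hs, ht⟩
    rw [argIncrement_congr hconst, argIncrement_const (hF₀ _ ⟨by simp, ht⟩)] at hside
    linarith
  rw [hvert 1 (by simp), hvert 0 (by simp), hhoriz 0 (by simp) h₀, hhoriz 1 (by simp) h₁]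

/-! ### Divided differences -/

section Algebra

variable {𝕜 E : Type*} [Field 𝕜] [AddCommGroup E] [Module 𝕜 E]

open Classical in
/-- The first divided difference of `f`, extended to the diagonal by `f'`. Unlike in `dslope`, the
diagonal values are a parameter, so that one-sided derivatives are allowed at the ends of an
interval. -/
noncomputable def dividedDiff (f f' : 𝕜 → E) (p : 𝕜 × 𝕜) : E :=
  if p.1 = p.2 then f' p.1 else slope f p.1 p.2

theorem dividedDiff_same (f f' : 𝕜 → E) (x : 𝕜) : dividedDiff f f' (x, x) = f' x :=
  if_pos rfl

theorem dividedDiff_of_ne (f f' : 𝕜 → E) {x y : 𝕜} (h : x ≠ y) :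
    dividedDiff f f' (x, y) = slope f x y :=
  if_neg h

theorem dividedDiff_comm (f f' : 𝕜 → E) (x y : 𝕜) :
    dividedDiff f f' (x, y) = dividedDiff f f' (y, x) := by
  rcases eq_or_ne x y with rfl | h
  · rfl
  · rw [dividedDiff_of_ne _ _ h, dividedDiff_of_ne _ _ h.symm, slope_comm]

theorem sub_smul_dividedDiff (f f' : 𝕜 → E) (x y : 𝕜) :
    (y - x) • dividedDiff f f' (x, y) = f y - f x := by
  rcases eq_or_ne x y with rfl | h
  · simp
  · rw [dividedDiff_of_ne _ _ h, sub_smul_slope, vsub_eq_sub]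

theorem dividedDiff_ne_zero {f f' : 𝕜 → E} {S : Set 𝕜} (hf : InjOn f S) {x y : 𝕜} (hx : x ∈ S)
    (hy : y ∈ S) (hf' : f' x ≠ 0) : dividedDiff f f' (x, y) ≠ 0 := by
  rcases eq_or_ne x y with rfl | h
  · rwa [dividedDiff_same]
  · rw [dividedDiff_of_ne _ _ h, Ne, slope_eq_zero_iff]
    exact fun heq => h (hf hx hy heq)

theorem dividedDiff_comp {K : Type*} [Field K] [Algebra 𝕜 K] {γ γ' d : 𝕜 → K} {g g' : K → K}
    {x : 𝕜} (hd : d x = g' (γ x) * γ' x) (y : 𝕜) :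
    dividedDiff (g ∘ γ) d (x, y) = dividedDiff g g' (γ x, γ y) * dividedDiff γ γ' (x, y) := by
  rcases eq_or_ne x y with rfl | hxy
  · simp only [dividedDiff_same, hd]
  rw [dividedDiff_of_ne _ _ hxy, dividedDiff_of_ne _ _ hxy, slope_def_module (g ∘ γ),
    slope_def_module γ, mul_smul_comm, mul_comm, ← smul_eq_mul (_ - _), sub_smul_dividedDiff]
  rfl

end Algebra

section NormedField

variable {𝕜 E : Type*} [NontriviallyNormedField 𝕜] [NormedAddCommGroup E] [NormedSpace 𝕜 E]

theorem continuous_dividedDiff_deriv {f : 𝕜 → E} (hf : Continuous f) {x : 𝕜}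
    (hd : DifferentiableAt 𝕜 f x) : Continuous fun y => dividedDiff f (deriv f) (x, y) := by
  have hdslope : (fun y => dividedDiff f (deriv f) (x, y)) = dslope f x := by
    funext y
    rcases eq_or_ne x y with rfl | h
    · rw [dividedDiff_same, dslope_same]
    · rw [dividedDiff_of_ne _ _ h, dslope_of_ne _ h.symm]
  rw [hdslope, ← continuousOn_univ]
  exact (continuousOn_dslope univ_mem).2 ⟨hf.continuousOn, hd⟩

theorem continuousWithinAt_dividedDiff_of_ne {f : 𝕜 → E} (f' : 𝕜 → E) {S : Set 𝕜} {x y : 𝕜}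
    (h : x ≠ y) (hx : ContinuousWithinAt f S x) (hy : ContinuousWithinAt f S y) :
    ContinuousWithinAt (dividedDiff f f') (S ×ˢ S) (x, y) := by
  have hslope : ContinuousWithinAt (fun p : 𝕜 × 𝕜 => slope f p.1 p.2) (S ×ˢ S) (x, y) := by
    simp only [slope_def_module]
    exact ((continuousWithinAt_snd.sub continuousWithinAt_fst).inv₀ (sub_ne_zero.2 h.symm)).smul
      ((hy.comp continuousWithinAt_snd mapsTo_snd_prod).sub
        (hx.comp continuousWithinAt_fst mapsTo_fst_prod))
  refine hslope.congr_of_eventuallyEq ?_ (dividedDiff_of_ne f f' h)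
  filter_upwards [mem_nhdsWithin_of_mem_nhds
    ((isOpen_ne_fun continuous_fst continuous_snd).mem_nhds h)] with p hp
  exact dividedDiff_of_ne f f' hp

end NormedField

section MeanValue

variable {𝕜 E : Type*} [RCLike 𝕜] [NormedAddCommGroup E] [NormedSpace 𝕜 E] {f f' : 𝕜 → E}
  {S : Set 𝕜}

theorem norm_dividedDiff_sub_le (hS : Convex ℝ S) (hf : ∀ x ∈ S, HasDerivWithinAt f (f' x) S x)
    {c : E} {C : ℝ} (hC : ∀ x ∈ S, ‖f' x - c‖ ≤ C) {x y : 𝕜} (hx : x ∈ S) (hy : y ∈ S) :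
    ‖dividedDiff f f' (x, y) - c‖ ≤ C := by
  rcases eq_or_ne x y with rfl | h
  · rw [dividedDiff_same]
    exact hC x hx
  have hmvt : ‖(f y - y • c) - (f x - x • c)‖ ≤ C * ‖y - x‖ :=
    hS.norm_image_sub_le_of_norm_hasDerivWithin_le (f := fun z => f z - z • c)
      (f' := fun z => f' z - c)
      (fun z hz => by simpa using (hf z hz).fun_sub ((hasDerivWithinAt_id z S).smul_const c))
      hC hx hy
  have hyx : 0 < ‖y - x‖ := norm_pos_iff.2 (sub_ne_zero.2 h.symm)
  rw [sub_sub_sub_comm, ← sub_smul, ← sub_smul_dividedDiff f f' x y, ← smul_sub, norm_smul,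
    mul_comm] at hmvt
  exact le_of_mul_le_mul_right hmvt hyx

theorem continuousWithinAt_dividedDiff_same (hS : Convex ℝ S)
    (hf : ∀ x ∈ S, HasDerivWithinAt f (f' x) S x) {a : 𝕜} (hf' : ContinuousWithinAt f' S a) :
    ContinuousWithinAt (dividedDiff f f') (S ×ˢ S) (a, a) := by
  rw [ContinuousWithinAt, dividedDiff_same, Metric.tendsto_nhds]
  intro ε hε
  obtain ⟨δ, hδ, hclose⟩ := Metric.continuousWithinAt_iff.1 hf' (ε / 2) (half_pos hε)
  have hconv : Convex ℝ (S ∩ Metric.ball a δ) := hS.inter (convex_ball a δ)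
  filter_upwards [self_mem_nhdsWithin, mem_nhdsWithin_of_mem_nhds
    (prod_mem_nhds (Metric.ball_mem_nhds a hδ) (Metric.ball_mem_nhds a hδ))] with p hpS hpδ
  rw [dist_eq_norm]
  refine (norm_dividedDiff_sub_le hconv (fun x hx => (hf x hx.1).mono inter_subset_left)
    (fun x hx => ?_) ⟨hpS.1, hpδ.1⟩ ⟨hpS.2, hpδ.2⟩).trans_lt (half_lt_self hε)
  rw [← dist_eq_norm]
  exact (hclose hx.1 hx.2).le

theorem continuousOn_dividedDiff_of_convex (hS : Convex ℝ S)
    (hf : ∀ x ∈ S, HasDerivWithinAt f (f' x) S x) (hf' : ContinuousOn f' S) :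
    ContinuousOn (dividedDiff f f') (S ×ˢ S) := by
  rintro ⟨x, y⟩ ⟨hx, hy⟩
  rcases eq_or_ne x y with rfl | h
  · exact continuousWithinAt_dividedDiff_same hS hf (hf' x hx)
  · exact continuousWithinAt_dividedDiff_of_ne f' h (hf x hx).continuousWithinAt
      (hf y hy).continuousWithinAt

theorem continuousOn_dividedDiff_of_isOpen (hS : IsOpen S)
    (hf : ∀ x ∈ S, HasDerivAt f (f' x) x) (hf' : ContinuousOn f' S) :
    ContinuousOn (dividedDiff f f') (S ×ˢ S) := by
  rintro ⟨x, y⟩ ⟨hx, hy⟩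
  rcases eq_or_ne x y with rfl | h
  · obtain ⟨δ, hδ, hball⟩ := Metric.isOpen_iff.1 hS x hx
    have hcont := continuousWithinAt_dividedDiff_same (convex_ball x δ)
      (fun z hz => (hf z (hball hz)).hasDerivWithinAt) ((hf' x hx).mono hball)
    exact (hcont.continuousAt (prod_mem_nhds (Metric.ball_mem_nhds x hδ)
      (Metric.ball_mem_nhds x hδ))).continuousWithinAt
  · exact continuousWithinAt_dividedDiff_of_ne f' h (hf x hx).continuousAt.continuousWithinAt
      (hf y hy).continuousAt.continuousWithinAt

end MeanValue

/-! ### Chords of curves and of their representatives -/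

theorem IsRegularCurve.continuousOn_dividedDiff {r : ℝ → ℂ} (hr : IsRegularCurve r) :
    ContinuousOn (dividedDiff r (curveDeriv r)) (Icc 0 1 ×ˢ Icc 0 1) :=
  continuousOn_dividedDiff_of_convex (convex_Icc 0 1)
    (fun t ht => (hr.1.differentiableOn one_ne_zero t ht).hasDerivWithinAt)
    (hr.1.continuousOn_derivWithin (uniqueDiffOn_Icc zero_lt_one) le_rfl)

theorem IsRegularCurve.continuousOn_dividedDiff_right {r : ℝ → ℂ} (hr : IsRegularCurve r) {τ : ℝ}
    (hτ : τ ∈ Icc (0 : ℝ) 1) :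
    ContinuousOn (fun t => dividedDiff r (curveDeriv r) (τ, t)) (Icc 0 1) :=
  hr.continuousOn_dividedDiff.comp (by fun_prop) fun _ ht => ⟨hτ, ht⟩

theorem IsRegularSimpleCurve.dividedDiff_ne_zero {r : ℝ → ℂ} (hr : IsRegularSimpleCurve r) :
    ∀ p ∈ Icc (0 : ℝ) 1 ×ˢ Icc (0 : ℝ) 1, dividedDiff r (curveDeriv r) p ≠ 0 :=
  fun _ hp => _root_.dividedDiff_ne_zero hr.2 hp.1 hp.2 (hr.1.2 _ hp.1)

theorem IsRegularSimpleCurve.totalCurvature_eq {r : ℝ → ℂ} (hr : IsRegularSimpleCurve r) :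
    totalCurvature r = argIncrement (fun t => dividedDiff r (curveDeriv r) (0, t)) +
      argIncrement (fun t => dividedDiff r (curveDeriv r) (1, t)) := by
  rw [totalCurvature_eq_argIncrement, ← argIncrement_diag_of_symm hr.1.continuousOn_dividedDiff
    hr.dividedDiff_ne_zero (dividedDiff_comm r _)]
  simp only [dividedDiff_same]

theorem exists_ratio_of_homotopy {H : ℝ × ℝ → ℂ} {a b : ℝ} {p : ℂ} (ha : 0 ≤ a) (hab : a ≤ b)
    (hb : b ≤ 1) (hH : ContinuousOn H (Icc 0 1 ×ˢ Icc a b))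
    (hp : ∀ s ∈ Icc (0 : ℝ) 1, ∀ t ∈ Icc a b, H (s, t) ≠ p)
    (hHa : ∀ s ∈ Icc (0 : ℝ) 1, H (s, a) = H (0, a))
    (hHb : ∀ s ∈ Icc (0 : ℝ) 1, H (s, b) = H (0, b)) :
    ∃ k : ℝ → ℂ, ContinuousOn k (Icc 0 1) ∧ (∀ t, k t ≠ 0) ∧ argIncrement k = 0 ∧
      (∀ t ≤ a, k t = 1) ∧ (∀ t ≥ b, k t = 1) ∧
      ∀ t ∈ Icc a b, H (0, t) - p = k t * (H (1, t) - p) := by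
  have h0 : (0 : ℝ) ∈ Icc (0 : ℝ) 1 := left_mem_Icc.2 zero_le_one
  have h1 : (1 : ℝ) ∈ Icc (0 : ℝ) 1 := right_mem_Icc.2 zero_le_one
  let clamp : ℝ → ℝ := fun t => projIcc a b hab t
  have hclamp : Continuous clamp := continuous_subtype_val.comp continuous_projIcc
  have hmem : ∀ t, clamp t ∈ Icc a b := fun t => (projIcc a b hab t).2
  have hleft : ∀ t ≤ a, clamp t = a := fun t ht => by simp only [clamp, projIcc_of_le_left hab ht]
  have hright : ∀ t ≥ b, clamp t = b := fun t ht => by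
    simp only [clamp, projIcc_of_right_le hab ht]
  let F : ℝ × ℝ → ℂ := fun x => H (x.1, clamp x.2) - p
  have hF : ContinuousOn F (Icc 0 1 ×ˢ Icc 0 1) :=
    (hH.comp (by fun_prop) fun x hx => ⟨hx.1, hmem x.2⟩).sub continuousOn_const
  have hF₀ : ∀ s ∈ Icc (0 : ℝ) 1, ∀ t, F (s, t) ≠ 0 := fun s hs t =>
    sub_ne_zero.2 (hp s hs _ (hmem t))
  have hFa : ∀ s ∈ Icc (0 : ℝ) 1, ∀ t ≤ a, F (s, t) = F (0, t) := fun s hs t ht => by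
    simp only [F, hleft t ht, hHa s hs]
  have hFb : ∀ s ∈ Icc (0 : ℝ) 1, ∀ t ≥ b, F (s, t) = F (0, t) := fun s hs t ht => by
    simp only [F, hright t ht, hHb s hs]
  have hside : ∀ s ∈ Icc (0 : ℝ) 1, ContinuousOn (fun t => F (s, t)) (Icc 0 1) := fun s hs =>
    hF.comp (by fun_prop) fun t ht => ⟨hs, ht⟩
  refine ⟨fun t => F (0, t) / F (1, t), (hside 0 h0).div (hside 1 h1) fun t _ => hF₀ 1 h1 t,
    fun t => div_ne_zero (hF₀ 0 h0 t) (hF₀ 1 h1 t), ?_, fun t ht => ?_, fun t ht => ?_,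
    fun t ht => ?_⟩
  · rw [argIncrement_div (hside 0 h0) (fun t _ => hF₀ 0 h0 t) (hside 1 h1) fun t _ => hF₀ 1 h1 t,
      argIncrement_eq_of_homotopy hF (fun x hx => hF₀ _ hx.1 _) (fun s hs => hFa s hs 0 ha)
        fun s hs => hFb s hs 1 hb, sub_self]
  · simp only [hFa 1 h1 t ht, div_self (hF₀ 0 h0 t)]
  · simp only [hFb 1 h1 t ht, div_self (hF₀ 0 h0 t)]
  · have hFt : ∀ s, F (s, t) = H (s, t) - p := fun s => by
      simp only [F, clamp, projIcc_of_mem hab ht]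
    rw [← hFt, ← hFt, div_mul_cancel₀ _ (hF₀ 1 h1 t)]

theorem mem_Icc_zero_one_of_eq_or_eq {τ : ℝ} (hτ : τ = 0 ∨ τ = 1) : τ ∈ Icc (0 : ℝ) 1 := by
  rcases hτ with rfl | rfl <;> simp

namespace Represents

variable {r η : ℝ → ℂ} {τ : ℝ}

theorem eventuallyEq (h : Represents r η) (hτ : τ = 0 ∨ τ = 1) : r =ᶠ[𝓝[Icc 0 1] τ] η := by
  obtain ⟨ε, ⟨hε, -⟩, heq, -⟩ := h
  rcases hτ with rfl | rfl
  · filter_upwards [self_mem_nhdsWithin, mem_nhdsWithin_of_mem_nhds (Iic_mem_nhds hε)]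
      with t ht htε
    exact heq t (.inl ⟨ht.1, htε⟩)
  · filter_upwards [self_mem_nhdsWithin,
      mem_nhdsWithin_of_mem_nhds (Ici_mem_nhds (sub_lt_self 1 hε))] with t ht htε
    exact heq t (.inr ⟨htε, ht.2⟩)

theorem apply_eq (h : Represents r η) (hτ : τ = 0 ∨ τ = 1) : r τ = η τ :=
  (h.eventuallyEq hτ).eq_of_nhdsWithin (mem_Icc_zero_one_of_eq_or_eq hτ)

theorem curveDeriv_eq (h : Represents r η) (hτ : τ = 0 ∨ τ = 1) :
    curveDeriv r τ = curveDeriv η τ :=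
  (h.eventuallyEq hτ).derivWithin_eq (h.apply_eq hτ)

theorem exists_ratio (h : Represents r η) (hr : InjOn r (Icc 0 1)) (hτ : τ = 0 ∨ τ = 1) :
    ∃ k : ℝ → ℂ, ContinuousOn k (Icc 0 1) ∧ (∀ t, k t ≠ 0) ∧ argIncrement k = 0 ∧ k τ = 1 ∧
      ∀ t ∈ Icc (0 : ℝ) 1, η t - η τ = k t * (r t - r τ) := by
  have hrτ : r τ = η τ := h.apply_eq hτ
  obtain ⟨ε, ⟨hε, hε'⟩, heq, H, hH, hH₀₁, hHends, hHavoid⟩ := h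
  have hτmem : τ ∈ Icc (0 : ℝ) ε ∪ Icc (1 - ε) 1 := by
    rcases hτ with rfl | rfl
    · exact .inl ⟨le_rfl, hε.le⟩
    · exact .inr ⟨by linarith, le_rfl⟩
  have hne : ∀ t ∈ Icc ε (1 - ε), r t ≠ r τ := fun t ht hrt => by
    have := hr ⟨by linarith [ht.1], by linarith [ht.2]⟩ (mem_Icc_zero_one_of_eq_or_eq hτ) hrt
    rcases hτ with rfl | rfl <;> linarith [ht.1, ht.2]
  have hp : ∀ s ∈ Icc (0 : ℝ) 1, ∀ t ∈ Icc ε (1 - ε), H (s, t) ≠ r τ := by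
    intro s hs t ht
    rcases ht.1.eq_or_lt with rfl | hlt
    · rw [(hHends s hs).1, ← heq ε (.inl ⟨hε.le, le_rfl⟩)]
      exact hne ε ht
    rcases ht.2.eq_or_lt with rfl | hgt
    · rw [(hHends s hs).2, ← heq (1 - ε) (.inr ⟨le_rfl, by linarith⟩)]
      exact hne (1 - ε) ht
    · intro hHτ
      exact hHavoid s hs t ⟨hlt, hgt⟩ (image_union η _ _ ▸ ⟨τ, hτmem, hrτ ▸ hHτ.symm⟩)
  obtain ⟨k, hk, hk₀, hkarg, hkleft, hkright, hkH⟩ := exists_ratio_of_homotopy hε.le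
    (by linarith : ε ≤ 1 - ε) (by linarith) hH hp
    (fun s hs => by rw [(hHends s hs).1, (hHends 0 (by simp)).1])
    fun s hs => by rw [(hHends s hs).2, (hHends 0 (by simp)).2]
  have hkend : ∀ t ∈ Icc (0 : ℝ) ε ∪ Icc (1 - ε) 1, k t = 1 := fun t ht =>
    ht.elim (fun ht => hkleft t ht.2) fun ht => hkright t ht.1
  refine ⟨k, hk, hk₀, hkarg, hkend τ hτmem, fun t ht => ?_⟩
  by_cases htend : t ∈ Icc (0 : ℝ) ε ∪ Icc (1 - ε) 1
  · rw [hkend t htend, heq t htend, hrτ, one_mul]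
  · have htmid : t ∈ Icc ε (1 - ε) := by grind
    rw [← hrτ, ← (hH₀₁ t htmid).1, ← (hH₀₁ t htmid).2, hkH t htmid]

theorem exists_dividedDiff_eq_mul (h : Represents r η) (hr : InjOn r (Icc 0 1))
    (hτ : τ = 0 ∨ τ = 1) :
    ∃ k : ℝ → ℂ, ContinuousOn k (Icc 0 1) ∧ (∀ t, k t ≠ 0) ∧ argIncrement k = 0 ∧
      ∀ t ∈ Icc (0 : ℝ) 1, dividedDiff η (curveDeriv η) (τ, t) =
        k t * dividedDiff r (curveDeriv r) (τ, t) := by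
  obtain ⟨k, hk, hk₀, hkarg, hkτ, hηr⟩ := h.exists_ratio hr hτ
  refine ⟨k, hk, hk₀, hkarg, fun t ht => ?_⟩
  rcases eq_or_ne τ t with rfl | hne
  · rw [dividedDiff_same, dividedDiff_same, hkτ, one_mul, h.curveDeriv_eq hτ]
  · rw [dividedDiff_of_ne _ _ hne, dividedDiff_of_ne _ _ hne, slope_def_module, slope_def_module,
      hηr t ht, mul_smul_comm]

theorem dividedDiff_ne_zero (h : Represents r η) (hr : IsRegularSimpleCurve r)
    (hτ : τ = 0 ∨ τ = 1) :
    ∀ t ∈ Icc (0 : ℝ) 1, dividedDiff η (curveDeriv η) (τ, t) ≠ 0 := fun t ht => by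
  obtain ⟨k, -, hk₀, -, hηr⟩ := h.exists_dividedDiff_eq_mul hr.2 hτ
  rw [hηr t ht]
  exact mul_ne_zero (hk₀ t)
    (hr.dividedDiff_ne_zero _ ⟨mem_Icc_zero_one_of_eq_or_eq hτ, ht⟩)

theorem continuousOn_dividedDiff (h : Represents r η) (hr : IsRegularSimpleCurve r)
    (hτ : τ = 0 ∨ τ = 1) :
    ContinuousOn (fun t => dividedDiff η (curveDeriv η) (τ, t)) (Icc 0 1) := by
  obtain ⟨k, hk, -, -, hηr⟩ := h.exists_dividedDiff_eq_mul hr.2 hτ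
  exact (hk.mul (hr.1.continuousOn_dividedDiff_right
    (mem_Icc_zero_one_of_eq_or_eq hτ))).congr hηr

theorem argIncrement_dividedDiff_eq (h : Represents r η) (hr : IsRegularSimpleCurve r)
    (hτ : τ = 0 ∨ τ = 1) :
    argIncrement (fun t => dividedDiff η (curveDeriv η) (τ, t)) =
      argIncrement (fun t => dividedDiff r (curveDeriv r) (τ, t)) := by
  obtain ⟨k, hk, hk₀, hkarg, hηr⟩ := h.exists_dividedDiff_eq_mul hr.2 hτ
  have hτI : τ ∈ Icc (0 : ℝ) 1 := mem_Icc_zero_one_of_eq_or_eq hτ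
  rw [argIncrement_congr hηr, argIncrement_mul hk (fun t _ => hk₀ t)
    (hr.1.continuousOn_dividedDiff_right hτI) (fun t ht => hr.dividedDiff_ne_zero _ ⟨hτI, ht⟩),
    hkarg, zero_add]

theorem continuousOn (h : Represents r η) (hr : IsRegularSimpleCurve r) :
    ContinuousOn η (Icc 0 1) := by
  have hdd := h.continuousOn_dividedDiff hr (.inl rfl)
  have hcont : ContinuousOn
      (fun t : ℝ => (t - 0) • dividedDiff η (curveDeriv η) (0, t) + η 0) (Icc 0 1) := by
    fun_prop
  exact hcont.congr fun t _ => eq_add_of_sub_eq (sub_smul_dividedDiff η (curveDeriv η) 0 t).symm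

end Represents

theorem argIncrement_dividedDiff_comp {f : ℂ → ℂ} (hfc : Continuous f)
    (hfi : Function.Injective f) {r s η : ℝ → ℂ} (hr : IsRegularSimpleCurve r)
    (hs : IsRegularSimpleCurve s) (hr' : Represents r η) (hs' : Represents s (f ∘ η)) {τ : ℝ}
    (hτ : τ = 0 ∨ τ = 1) (hd : DifferentiableAt ℂ f (η τ)) (hd₀ : deriv f (η τ) ≠ 0) :
    argIncrement (fun t => dividedDiff s (curveDeriv s) (τ, t)) =
      argIncrement (fun t => dividedDiff f (deriv f) (η τ, η t)) +
        argIncrement (fun t => dividedDiff r (curveDeriv r) (τ, t)) := by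
  have hτI : τ ∈ Icc (0 : ℝ) 1 := mem_Icc_zero_one_of_eq_or_eq hτ
  have hη₀ : curveDeriv η τ ≠ 0 := hr'.curveDeriv_eq hτ ▸ hr.1.2 τ hτI
  have hη : DifferentiableWithinAt ℝ η (Icc 0 1) τ :=
    differentiableWithinAt_of_derivWithin_ne_zero hη₀
  have hchain : curveDeriv (f ∘ η) τ = deriv f (η τ) * curveDeriv η τ :=
    (hd.hasDerivAt.comp_hasDerivWithinAt τ hη.hasDerivWithinAt).derivWithin
      (uniqueDiffOn_Icc zero_lt_one τ hτI)
  have hfη : ContinuousOn (fun t => dividedDiff f (deriv f) (η τ, η t)) (Icc 0 1) :=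
    (continuous_dividedDiff_deriv hfc hd).comp_continuousOn (hr'.continuousOn hr)
  rw [← hs'.argIncrement_dividedDiff_eq hs hτ, ← hr'.argIncrement_dividedDiff_eq hr hτ,
    ← argIncrement_mul hfη
      (fun t _ => dividedDiff_ne_zero hfi.injOn (mem_univ _) (mem_univ _) hd₀)
      (hr'.continuousOn_dividedDiff hr hτ) (hr'.dividedDiff_ne_zero hr hτ)]
  exact argIncrement_congr fun t _ => dividedDiff_comp hchain t

theorem ne_zero_of_mul_eq_ofReal_pos {z w : ℂ} {ρ : ℝ} (hρ : 0 < ρ) (h : z * w = ρ) : z ≠ 0 :=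
  left_ne_zero_of_mul (h ▸ Complex.ofReal_ne_zero.2 hρ.ne')

theorem arg_deriv_sub_eq_argIncrement_add {D : Set ℂ} (hD : IsOpen D) {f : ℂ → ℂ}
    (hf : DifferentiableOn ℂ f D) (hfi : InjOn f D) {arg₀ : ℂ → ℝ}
    (harg : ContinuousOn arg₀ D)
    (hargpos : ∀ z ∈ D, ∃ ρ : ℝ, 0 < ρ ∧
      deriv f z * Complex.exp (-(arg₀ z : ℂ) * Complex.I) = (ρ : ℂ))
    {γ : ℝ → ℂ} (hγ : ContinuousOn γ (Icc 0 1)) (hγD : MapsTo γ (Icc 0 1) D) :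
    arg₀ (γ 1) - arg₀ (γ 0) = argIncrement (fun t => dividedDiff f (deriv f) (γ 0, γ t)) +
      argIncrement (fun t => dividedDiff f (deriv f) (γ 1, γ t)) := by
  have hcont : ContinuousOn (dividedDiff f (deriv f)) (D ×ˢ D) :=
    continuousOn_dividedDiff_of_isOpen hD
      (fun z hz => (hf.differentiableAt (hD.mem_nhds hz)).hasDerivAt) (hf.deriv hD).continuousOn
  have hf₀ : ∀ z ∈ D, deriv f z ≠ 0 := fun z hz =>
    let ⟨_, hρ, hpos⟩ := hargpos z hz
    ne_zero_of_mul_eq_ofReal_pos hρ hpos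
  have hlift : IsArgLift (fun t => deriv f (γ t)) fun t => arg₀ (γ t) :=
    ⟨harg.comp hγ hγD, fun t ht => hargpos _ (hγD ht)⟩
  rw [← hlift.argIncrement_eq, ← argIncrement_diag_of_symm
    (F := fun x => dividedDiff f (deriv f) (γ x.1, γ x.2))
    (hcont.comp (hγ.prodMap hγ) (hγD.prodMap hγD))
    (fun x hx => dividedDiff_ne_zero hfi (hγD hx.1) (hγD hx.2) (hf₀ _ (hγD hx.1)))
    fun s t => dividedDiff_comm f _ _ _]
  simp only [dividedDiff_same]

theorem winding_difference_eq_arg_deriv_general {D : Set ℂ} (hDopen : IsOpen D)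
    (hDconn : IsPreconnected D) {f : ℂ → ℂ} (hfc : Continuous f) (hfi : Function.Injective f)
    (hf : DifferentiableOn ℂ f D) {arg₀ : ℂ → ℝ} (harg : ContinuousOn arg₀ D)
    (hargpos : ∀ z ∈ D, ∃ ρ : ℝ, 0 < ρ ∧
      deriv f z * Complex.exp (-(arg₀ z : ℂ) * Complex.I) = (ρ : ℂ))
    {η r s : ℝ → ℂ} (hstartD : η 0 ∈ D) (hendD : η 1 ∈ D)
    (hr : IsRegularSimpleCurve r) (hs : IsRegularSimpleCurve s)
    (hr' : Represents r η) (hs' : Represents s (f ∘ η)) :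
    totalCurvature s - totalCurvature r = arg₀ (η 1) - arg₀ (η 0) := by
  have hd : ∀ z ∈ D, DifferentiableAt ℂ f z := fun z hz =>
    hf.differentiableAt (hDopen.mem_nhds hz)
  have hd₀ : ∀ z ∈ D, deriv f z ≠ 0 := fun z hz =>
    let ⟨_, hρ, hpos⟩ := hargpos z hz
    ne_zero_of_mul_eq_ofReal_pos hρ hpos
  obtain ⟨γ, hγD⟩ := (hDopen.isConnected_iff_isPathConnected.1
    ⟨⟨η 0, hstartD⟩, hDconn⟩).joinedIn _ hstartD _ hendD
  have hγ : ContinuousOn γ.extend (Icc 0 1) := γ.continuous_extend.continuousOn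
  have hdeform : ∀ p ∈ D, argIncrement (fun t => dividedDiff f (deriv f) (p, η t)) =
      argIncrement (fun t => dividedDiff f (deriv f) (p, γ.extend t)) := fun p hp =>
    argIncrement_comp_eq_of_convex convex_univ
      (continuous_dividedDiff_deriv hfc (hd p hp)).continuousOn
      (fun z _ => dividedDiff_ne_zero hfi.injOn (mem_univ _) (mem_univ _) (hd₀ p hp))
      (hr'.continuousOn hr) (mapsTo_univ _ _) hγ (mapsTo_univ _ _)
      γ.extend_zero.symm γ.extend_one.symm
  have hbranch := arg_deriv_sub_eq_argIncrement_add hDopen hf hfi.injOn harg hargpos hγ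
    fun t ht => by rw [γ.extend_apply ht]; exact hγD _
  rw [γ.extend_zero, γ.extend_one] at hbranch
  rw [hr.totalCurvature_eq, hs.totalCurvature_eq, hbranch, ← hdeform _ hstartD, ← hdeform _ hendD,
    argIncrement_dividedDiff_comp hfc hfi hr hs hr' hs' (.inl rfl) (hd _ hstartD) (hd₀ _ hstartD),
    argIncrement_dividedDiff_comp hfc hfi hr hs hr' hs' (.inr rfl) (hd _ hendD) (hd₀ _ hendD)]
  ring

/-- **Proposition 2.7 (consistency of `arg f'`).** Let `D ⊂ ℂ` be a bounded simply
connected open set, `f` a homeomorphism of `ℂ` holomorphic on `D`, and `arg₀` a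
continuous branch of `arg f'` on `D`. Let `η` be a curve regular near its
endpoints with endpoints in `D`. Then for every regular simple curve `r`
representing `η` and every regular simple curve `s` representing `f ∘ η`,
`TC(s) − TC(r) = arg₀(η(1)) − arg₀(η(0))`. -/
theorem winding_difference_eq_arg_deriv
    (D : Set ℂ) (hDopen : IsOpen D) (hDbdd : Bornology.IsBounded D)
    (hDsc : SimplyConnectedSpace ↥D)
    (f : ℂ ≃ₜ ℂ) (hf : DifferentiableOn ℂ (⇑f) D)
    (arg₀ : ℂ → ℝ) (harg : ContinuousOn arg₀ D)
    (hargpos : ∀ z ∈ D, ∃ ρ : ℝ, 0 < ρ ∧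
      deriv (⇑f) z * Complex.exp (-(arg₀ z : ℂ) * Complex.I) = (ρ : ℂ))
    (η : ℝ → ℂ) (hη : RegularNearEndpoints η)
    (hstartD : η 0 ∈ D) (hendD : η 1 ∈ D)
    (r s : ℝ → ℂ)
    (hr : IsRegularSimpleCurve r) (hs : IsRegularSimpleCurve s)
    (hr' : Represents r η) (hs' : Represents s (⇑f ∘ η)) :
    totalCurvature s - totalCurvature r = arg₀ (η 1) - arg₀ (η 0) := by
  exact winding_difference_eq_arg_deriv_general hDopen
    (isPreconnected_iff_preconnectedSpace.2 inferInstance) f.continuous f.injective hf harg hargpos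
    hstartD hendD hr hs hr' hs'
end

section
/- Let m ≥ 1 and let (M⁺, M⁻) be a meander of size m with winding function θ. Then for every pair {x, y} ∈ M⁺ with x < y < ∞ one has θ(y) = θ(x) − π, and for every pair {x, y} ∈ M⁻ with x < y < ∞ one has θ(y) = θ(x) + π. That is, M⁺ ∈ A_θ⁺ and M⁻ ∈ A_θ⁻. -/
/-!
Meanders of size `m`.  The point set `P = {1, …, 2m−1} ∪ {∞}` (ordered with `∞`
largest) is modeled as `Fin (n+1)` with `n = 2*m - 1`, the point `k` being index
`k − 1` and `∞` being the last index `Fin.last n`.  A (perfect) matching is an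
involution without fixed points, recorded via its partner function.
-/

namespace Meander

/-- A perfect matching of `Fin (n+1)`, given by its partner function: a fixed-point
free involution. -/
def IsMatching {n : ℕ} (M : Fin (n + 1) → Fin (n + 1)) : Prop :=
  Function.Involutive M ∧ ∀ x, M x ≠ x

/-- A matching is noncrossing if there are no two pairs `{a,b}`, `{c,d}` with
`a < c < b < d`. -/
def Noncrossing {n : ℕ} (M : Fin (n + 1) → Fin (n + 1)) : Prop :=
  ¬ ∃ a c : Fin (n + 1), a < c ∧ c < M a ∧ M a < M c

/-- The graph on the point set whose edge set is `M⁺ ∪ M⁻`. -/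
def meanderGraph {n : ℕ} (Mp Mm : Fin (n + 1) → Fin (n + 1)) :
    SimpleGraph (Fin (n + 1)) :=
  SimpleGraph.fromRel fun x y => Mp x = y ∨ Mm x = y

/-- A meander: a pair of noncrossing perfect matchings (upper `Mp`, lower `Mm`)
whose union is a connected graph. -/
def IsMeander {n : ℕ} (Mp Mm : Fin (n + 1) → Fin (n + 1)) : Prop :=
  IsMatching Mp ∧ Noncrossing Mp ∧ IsMatching Mm ∧ Noncrossing Mm ∧
    (meanderGraph Mp Mm).Connected

/-- The traversal sequence: `v₀ = ∞`, and `v_{i+1}` is the `M⁻`-partner of `vᵢ`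
if `i` is even and the `M⁺`-partner of `vᵢ` if `i` is odd. -/
def traversal {n : ℕ} (Mp Mm : Fin (n + 1) → Fin (n + 1)) : ℕ → Fin (n + 1)
  | 0 => Fin.last n
  | (i + 1) =>
      if i % 2 = 0 then Mm (traversal Mp Mm i) else Mp (traversal Mp Mm i)

/-- The winding increment `δᵢ`: `+π` if the step from `vᵢ` to `v_{i+1}` uses `M⁻`
(i.e. `i` even) and goes rightward, or uses `M⁺` (i.e. `i` odd) and goes leftward;
`−π` otherwise. -/
noncomputable def windingStep {n : ℕ} (Mp Mm : Fin (n + 1) → Fin (n + 1))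
    (i : ℕ) : ℝ :=
  if (i % 2 = 0 ∧ traversal Mp Mm i < traversal Mp Mm (i + 1)) ∨
      (i % 2 ≠ 0 ∧ traversal Mp Mm (i + 1) < traversal Mp Mm i)
  then Real.pi else -Real.pi

/-- The winding value along the traversal: `w₁ = 0` and `w_{i+1} = wᵢ + δᵢ`
(so `wᵢ = θ(vᵢ)` for `1 ≤ i`). -/
noncomputable def windingValue {n : ℕ} (Mp Mm : Fin (n + 1) → Fin (n + 1)) :
    ℕ → ℝ
  | 0 => 0
  | 1 => 0
  | (i + 2) => windingValue Mp Mm (i + 1) + windingStep Mp Mm (i + 1)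

/-- `θ : {1, …, n} → ℝ` is the winding function of `(Mp, Mm)`: for `1 ≤ i ≤ n`
the traversal point `vᵢ` is not `∞` and `θ(vᵢ)` equals the winding value `wᵢ`. -/
def IsWindingFunction {n : ℕ} (Mp Mm : Fin (n + 1) → Fin (n + 1))
    (θ : Fin n → ℝ) : Prop :=
  ∀ i : ℕ, 1 ≤ i → i ≤ n →
    ∃ h : (traversal Mp Mm i : ℕ) < n,
      θ ⟨(traversal Mp Mm i : ℕ), h⟩ = windingValue Mp Mm i

end Meander

namespace Meander

/-- `M ∈ A_θ⁺`: a noncrossing perfect matching such that `θ(y) = θ(x) − π` for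
every pair `{x, y}` of `M` with `x < y < ∞`. -/
def InAPlus {n : ℕ} (θ : Fin n → ℝ) (M : Fin (n + 1) → Fin (n + 1)) : Prop :=
  IsMatching M ∧ Noncrossing M ∧
    ∀ x y : Fin (n + 1), M x = y → x < y →
      ∀ (hy : (y : ℕ) < n) (hx : (x : ℕ) < n),
        θ ⟨(y : ℕ), hy⟩ = θ ⟨(x : ℕ), hx⟩ - Real.pi

/-- `M ∈ A_θ⁻`: a noncrossing perfect matching such that `θ(y) = θ(x) + π` for
every pair `{x, y}` of `M` with `x < y < ∞`. -/
def InAMinus {n : ℕ} (θ : Fin n → ℝ) (M : Fin (n + 1) → Fin (n + 1)) : Prop :=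
  IsMatching M ∧ Noncrossing M ∧
    ∀ x y : Fin (n + 1), M x = y → x < y →
      ∀ (hy : (y : ℕ) < n) (hx : (x : ℕ) < n),
        θ ⟨(y : ℕ), hy⟩ = θ ⟨(x : ℕ), hx⟩ + Real.pi

end Meander

/-!
The points `v₀, …, vₙ` are distinct, so they exhaust `P`, and `v_{n+1} = ∞` because it differs from
`v₁, …, vₙ`. Hence an arc avoiding `∞` joins `vᵢ` to `v_{i+1}` for some `1 ≤ i < n`, and the parity
of `i` determines its matching. Reversing the direction in which the arc is traversed negates `δᵢ`,
so the change of `θ` from its left end to its right end depends only on the matching.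
-/

namespace Meander

/-- The matching followed by the `i`-th traversal step: `M⁻` for even `i` and `M⁺` for odd `i`.
Indexing the two matchings by parity lets upper and lower arcs be treated together. -/
def stepMatching {n : ℕ} (Mp Mm : Fin (n + 1) → Fin (n + 1)) (i : ℕ) :
    Fin (n + 1) → Fin (n + 1) :=
  if i % 2 = 0 then Mm else Mp

/-- The change of angle along an arc of `stepMatching Mp Mm i` followed from left to right. -/
noncomputable def rightwardTurn (i : ℕ) : ℝ :=
  if i % 2 = 0 then Real.pi else -Real.pi

theorem rightwardTurn_congr {i j : ℕ} (h : i % 2 = j % 2) :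
    rightwardTurn i = rightwardTurn j := by
  simp only [rightwardTurn, h]

section Traversal

variable {n : ℕ} {Mp Mm : Fin (n + 1) → Fin (n + 1)}

theorem stepMatching_congr {i j : ℕ} (h : i % 2 = j % 2) :
    stepMatching Mp Mm i = stepMatching Mp Mm j := by
  simp only [stepMatching, h]

theorem isMatching_stepMatching (hMp : IsMatching Mp) (hMm : IsMatching Mm) (i : ℕ) :
    IsMatching (stepMatching Mp Mm i) := by
  unfold stepMatching
  split_ifs <;> assumption

theorem traversal_succ (i : ℕ) :
    traversal Mp Mm (i + 1) = stepMatching Mp Mm i (traversal Mp Mm i) := by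
  rw [traversal, stepMatching]
  split_ifs <;> rfl

theorem stepMatching_traversal_succ (hMp : IsMatching Mp) (hMm : IsMatching Mm) (i : ℕ) :
    stepMatching Mp Mm i (traversal Mp Mm (i + 1)) = traversal Mp Mm i := by
  rw [traversal_succ, (isMatching_stepMatching hMp hMm i).1]

theorem traversal_eq_last_of_eq_add_even (hMp : IsMatching Mp) (hMm : IsMatching Mm) {i d : ℕ}
    (hd : Even d) (h : traversal Mp Mm i = traversal Mp Mm (i + d)) :
    traversal Mp Mm d = Fin.last n := by
  induction i with
  | zero => simpa only [Nat.zero_add, traversal] using h.symm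
  | succ i ih =>
    have same_matching : stepMatching Mp Mm (i + d) = stepMatching Mp Mm i :=
      stepMatching_congr (by grind)
    rw [Nat.add_right_comm, traversal_succ, traversal_succ, same_matching] at h
    exact ih ((isMatching_stepMatching hMp hMm i).1.injective h)

-- A coincidence at odd distance folds inward, since both of its ends move along the same matching,
-- until it becomes a fixed point.
theorem traversal_ne_add_odd (hMp : IsMatching Mp) (hMm : IsMatching Mm) (i k : ℕ) :
    traversal Mp Mm i ≠ traversal Mp Mm (i + (2 * k + 1)) := by
  induction k generalizing i with
  | zero =>
    rw [traversal_succ]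
    exact ((isMatching_stepMatching hMp hMm i).2 _).symm
  | succ k ih =>
    intro h
    have same_matching : stepMatching Mp Mm (i + 1 + (2 * k + 1)) = stepMatching Mp Mm i :=
      stepMatching_congr (by omega)
    refine ih (i + 1) ?_
    rw [← stepMatching_traversal_succ hMp hMm (i + 1 + (2 * k + 1)), same_matching,
      traversal_succ, h]
    congr 2
    omega

theorem traversal_ne_add (hMp : IsMatching Mp) (hMm : IsMatching Mm) {d : ℕ}
    (hd : traversal Mp Mm d ≠ Fin.last n) (i : ℕ) :
    traversal Mp Mm i ≠ traversal Mp Mm (i + d) := by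
  rcases Nat.even_or_odd d with d_even | ⟨k, rfl⟩
  · exact fun h => hd (traversal_eq_last_of_eq_add_even hMp hMm d_even h)
  · exact traversal_ne_add_odd hMp hMm i k

theorem traversal_ne_of_lt (hMp : IsMatching Mp) (hMm : IsMatching Mm)
    (hlast : ∀ i, 1 ≤ i → i ≤ n → traversal Mp Mm i ≠ Fin.last n)
    {i j : ℕ} (hij : i < j) (hj : j ≤ i + n) : traversal Mp Mm i ≠ traversal Mp Mm j := by
  have h := traversal_ne_add hMp hMm (hlast (j - i) (by omega) (by omega)) i
  rwa [Nat.add_sub_cancel' hij.le] at h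

theorem exists_traversal_eq (hMp : IsMatching Mp) (hMm : IsMatching Mm)
    (hlast : ∀ i, 1 ≤ i → i ≤ n → traversal Mp Mm i ≠ Fin.last n) (x : Fin (n + 1)) :
    ∃ i ≤ n, traversal Mp Mm i = x := by
  have traversal_injective : Function.Injective fun i : Fin (n + 1) => traversal Mp Mm i :=
    .of_lt_imp_ne fun i j hij => traversal_ne_of_lt hMp hMm hlast hij (by omega)
  obtain ⟨i, hi⟩ := Finite.surjective_of_injective traversal_injective x
  exact ⟨i, i.is_le, hi⟩

theorem traversal_card_eq_last (hMp : IsMatching Mp) (hMm : IsMatching Mm)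
    (hlast : ∀ i, 1 ≤ i → i ≤ n → traversal Mp Mm i ≠ Fin.last n) :
    traversal Mp Mm (n + 1) = Fin.last n := by
  obtain ⟨i, hi, h⟩ := exists_traversal_eq hMp hMm hlast (traversal Mp Mm (n + 1))
  obtain rfl | i_pos := i.eq_zero_or_pos
  · exact h.symm
  · exact absurd h (traversal_ne_of_lt hMp hMm hlast (by omega) (by omega))

theorem exists_traversal_arc (hMp : IsMatching Mp) (hMm : IsMatching Mm)
    (hlast : ∀ i, 1 ≤ i → i ≤ n → traversal Mp Mm i ≠ Fin.last n)
    {c : ℕ} {x y : Fin (n + 1)} (hxy : stepMatching Mp Mm c x = y)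
    (hx : x ≠ Fin.last n) (hy : y ≠ Fin.last n) :
    ∃ i, 1 ≤ i ∧ i < n ∧ i % 2 = c % 2 ∧
      (traversal Mp Mm i = x ∧ traversal Mp Mm (i + 1) = y ∨
        traversal Mp Mm i = y ∧ traversal Mp Mm (i + 1) = x) := by
  obtain ⟨i, i_le, hi⟩ := exists_traversal_eq hMp hMm hlast x
  have i_ne_zero : i ≠ 0 := by
    rintro rfl
    exact hx hi.symm
  by_cases parity : i % 2 = c % 2
  · have next_eq : traversal Mp Mm (i + 1) = y := by
      rw [traversal_succ, hi, stepMatching_congr parity, hxy]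
    have i_ne : i ≠ n := by
      rintro rfl
      exact hy (next_eq.symm.trans (traversal_card_eq_last hMp hMm hlast))
    exact ⟨i, by omega, by omega, parity, .inl ⟨hi, next_eq⟩⟩
  · obtain ⟨k, rfl⟩ := Nat.exists_eq_succ_of_ne_zero i_ne_zero
    have parity_pred : k % 2 = c % 2 := by omega
    have prev_eq : traversal Mp Mm k = y := by
      rw [← stepMatching_traversal_succ hMp hMm k, hi, stepMatching_congr parity_pred, hxy]
    have k_ne_zero : k ≠ 0 := by
      rintro rfl
      exact hy prev_eq.symm
    exact ⟨k, by omega, by omega, parity_pred, .inr ⟨prev_eq, hi⟩⟩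

end Traversal

section Winding

variable {n : ℕ} {Mp Mm : Fin (n + 1) → Fin (n + 1)} {θ : Fin n → ℝ}

theorem windingStep_of_lt {i : ℕ} (h : traversal Mp Mm i < traversal Mp Mm (i + 1)) :
    windingStep Mp Mm i = rightwardTurn i := by
  simp only [windingStep, rightwardTurn, h, h.not_gt, and_true, and_false, or_false]

theorem windingStep_of_gt {i : ℕ} (h : traversal Mp Mm (i + 1) < traversal Mp Mm i) :
    windingStep Mp Mm i = -rightwardTurn i := by
  by_cases parity : i % 2 = 0 <;> simp [windingStep, rightwardTurn, h, h.not_gt, parity]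

theorem windingValue_succ {i : ℕ} (hi : 1 ≤ i) :
    windingValue Mp Mm (i + 1) = windingValue Mp Mm i + windingStep Mp Mm i := by
  obtain ⟨k, rfl⟩ := Nat.exists_eq_add_of_le' hi
  rfl

theorem IsWindingFunction.traversal_ne_last (hθ : IsWindingFunction Mp Mm θ) {i : ℕ}
    (hi : 1 ≤ i) (hin : i ≤ n) : traversal Mp Mm i ≠ Fin.last n :=
  Fin.lt_last_iff_ne_last.mp (hθ i hi hin).1

theorem IsWindingFunction.apply_eq_windingValue (hθ : IsWindingFunction Mp Mm θ) {i : ℕ}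
    (hi : 1 ≤ i) (hin : i ≤ n) {x : Fin (n + 1)} (hix : traversal Mp Mm i = x)
    (hx : (x : ℕ) < n) : θ ⟨x, hx⟩ = windingValue Mp Mm i := by
  subst hix
  exact (hθ i hi hin).2

theorem IsWindingFunction.apply_eq_add_rightwardTurn (hθ : IsWindingFunction Mp Mm θ)
    (hMp : IsMatching Mp) (hMm : IsMatching Mm) {c : ℕ} {x y : Fin (n + 1)}
    (hxy : stepMatching Mp Mm c x = y) (hlt : x < y) (hx : (x : ℕ) < n) (hy : (y : ℕ) < n) :
    θ ⟨y, hy⟩ = θ ⟨x, hx⟩ + rightwardTurn c := by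
  obtain ⟨i, hi, hin, parity, ⟨rfl, rfl⟩ | ⟨rfl, rfl⟩⟩ :=
    exists_traversal_arc hMp hMm (fun _ => hθ.traversal_ne_last) hxy
      (Fin.lt_last_iff_ne_last.mp hx) (Fin.lt_last_iff_ne_last.mp hy)
  all_goals
    rw [hθ.apply_eq_windingValue hi hin.le rfl,
      hθ.apply_eq_windingValue (Nat.le_add_left 1 i) hin rfl, windingValue_succ hi,
      ← rightwardTurn_congr parity]
  · rw [windingStep_of_lt hlt]
  · rw [windingStep_of_gt hlt, neg_add_cancel_right]

end Winding

end Meander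

open Meander in
/-- For a meander `(M⁺, M⁻)` of size `m` with winding function `θ`, every upper arc
decreases `θ` by `π` (left-to-right) and every lower arc increases it by `π`:
`M⁺ ∈ A_θ⁺` and `M⁻ ∈ A_θ⁻`. -/
theorem meander_matchings_mem_arcSets
    (m n : ℕ) (hm : 1 ≤ m) (hn : n = 2 * m - 1)
    (Mp Mm : Fin (n + 1) → Fin (n + 1)) (θ : Fin n → ℝ)
    (hmea : IsMeander Mp Mm) (hθ : IsWindingFunction Mp Mm θ) :
    InAPlus θ Mp ∧ InAMinus θ Mm := by
  obtain ⟨hMp, hMp_noncrossing, hMm, hMm_noncrossing, -⟩ := hmea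
  refine ⟨⟨hMp, hMp_noncrossing, ?_⟩, ⟨hMm, hMm_noncrossing, ?_⟩⟩
  · intro x y hxy hlt hy hx
    have upper_arc : stepMatching Mp Mm 1 x = y := hxy
    simpa [rightwardTurn, sub_eq_add_neg] using
      hθ.apply_eq_add_rightwardTurn hMp hMm upper_arc hlt hx hy
  · intro x y hxy hlt hy hx
    have lower_arc : stepMatching Mp Mm 0 x = y := hxy
    simpa [rightwardTurn] using hθ.apply_eq_add_rightwardTurn hMp hMm lower_arc hlt hx hy
end
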